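/- arXiv:2210.00630 — 3 statements merged into one kernel-verified Lean document; each statement's English description precedes it below -/
import Mathlib

section
/- There exists a constant C > 0 such that for every Horton set H of n ≥ 2 points, every point q of the plane stabs at most C·n·log n empty triangles of H. -/
open scoped Classical

noncomputable section

/-- Euclidean distance between two points of the plane `ℝ × ℝ`. -/
def elen (p q : ℝ × ℝ) : ℝ := Real.sqrt ((p.1 - q.1) ^ 2 + (p.2 - q.2) ^ 2)

/-- Orientation determinant of an ordered triple of points. -/
def orient (a b c : ℝ × ℝ) : ℝ :=
  (b.1 - a.1) * (c.2 - a.2) - (b.2 - a.2) * (c.1 - a.1)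

/-- A planar point set is in general position if no three distinct points are collinear. -/
def GeneralPosition (S : Set (ℝ × ℝ)) : Prop :=
  ∀ a ∈ S, ∀ b ∈ S, ∀ c ∈ S, a ≠ b → a ≠ c → b ≠ c →
    ¬ Collinear ℝ ({a, b, c} : Set (ℝ × ℝ))

/-- No two points of `S` share an `x`-coordinate. -/
def DistinctX (S : Set (ℝ × ℝ)) : Prop :=
  ∀ a ∈ S, ∀ b ∈ S, a ≠ b → a.1 ≠ b.1

/-- `p` lies strictly below the (non-vertical) line through `a` and `b`, where `a.1 < b.1`. -/
def StrictlyBelow (p a b : ℝ × ℝ) : Prop :=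
  (b.1 - a.1) * (p.2 - a.2) < (b.2 - a.2) * (p.1 - a.1)

/-- `p` lies strictly above the (non-vertical) line through `a` and `b`, where `a.1 < b.1`. -/
def StrictlyAbove (p a b : ℝ × ℝ) : Prop :=
  (b.2 - a.2) * (p.1 - a.1) < (b.1 - a.1) * (p.2 - a.2)

/-- `Y` is high above `X`: every line through two points of `Y` is above every point of `X`. -/
def HighAbove (Y X : Set (ℝ × ℝ)) : Prop :=
  ∀ a ∈ Y, ∀ b ∈ Y, a.1 < b.1 → ∀ p ∈ X, StrictlyBelow p a b

/-- `X` is deep below `Y`: every line through two points of `X` is below every point of `Y`. -/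
def DeepBelow (X Y : Set (ℝ × ℝ)) : Prop :=
  ∀ a ∈ X, ∀ b ∈ X, a.1 < b.1 → ∀ p ∈ Y, StrictlyAbove p a b

/-- The even-indexed points of `H` in increasing order of `x`-coordinate (`H₀`). -/
def evenPart (H : Finset (ℝ × ℝ)) : Finset (ℝ × ℝ) :=
  H.filter fun p => Even (H.filter fun q => q.1 < p.1).card

/-- The odd-indexed points of `H` in increasing order of `x`-coordinate (`H₁`). -/
def oddPart (H : Finset (ℝ × ℝ)) : Finset (ℝ × ℝ) :=
  H.filter fun p => ¬ Even (H.filter fun q => q.1 < p.1).card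

/-- Horton sets. -/
inductive IsHorton : Finset (ℝ × ℝ) → Prop
  | small (H : Finset (ℝ × ℝ)) (hgp : GeneralPosition ↑H) (hx : DistinctX ↑H)
      (hcard : H.card ≤ 2) : IsHorton H
  | split (H : Finset (ℝ × ℝ)) (hgp : GeneralPosition ↑H) (hx : DistinctX ↑H)
      (hcard : 2 < H.card) (h0 : IsHorton (evenPart H)) (h1 : IsHorton (oddPart H))
      (hhigh : HighAbove ↑(oddPart H) ↑(evenPart H))
      (hdeep : DeepBelow ↑(evenPart H) ↑(oddPart H)) : IsHorton H

/-- `t` is an empty triangle of the point set `S`: a three-element non-collinear subset of `S`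
whose open interior contains no point of `S`. -/
def IsEmptyTriangleOf (S : Set (ℝ × ℝ)) (t : Finset (ℝ × ℝ)) : Prop :=
  t.card = 3 ∧ (↑t : Set (ℝ × ℝ)) ⊆ S ∧ ¬ Collinear ℝ (↑t : Set (ℝ × ℝ)) ∧
    ∀ p ∈ S, p ∉ interior (convexHull ℝ (↑t : Set (ℝ × ℝ)))

/-- `τ S`: the number of empty triangles of `S`. -/
def tau (S : Set (ℝ × ℝ)) : ℕ :=
  {t : Finset (ℝ × ℝ) | IsEmptyTriangleOf S t}.ncard

/-- The number of empty triangles of `S` stabbed by the point `q`. -/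
def stabbedCount (S : Set (ℝ × ℝ)) (q : ℝ × ℝ) : ℕ :=
  {t : Finset (ℝ × ℝ) | IsEmptyTriangleOf S t ∧
    q ∈ interior (convexHull ℝ (↑t : Set (ℝ × ℝ)))}.ncard

/-- The number of empty triangles of `S` having `q` as a vertex. -/
def incidentCount (S : Set (ℝ × ℝ)) (q : ℝ × ℝ) : ℕ :=
  {t : Finset (ℝ × ℝ) | IsEmptyTriangleOf S t ∧ q ∈ t}.ncard

/-!
Let `T n` be the largest number of empty triangles that a point `q` stabs in a Horton set of `n`
points. Split such a set into its lower part `A` and its upper part `B`. Triangles inside `A` and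
triangles inside `B` are not both stabbed by `q`: the hull of `B` is above all lines spanned by `A`,
whereas no point of a triangle is above all three of its sides. Any other triangle has an edge in
one part and an apex `c` in the other. For fixed `c` these edges all cross the ray from `c` through
`q`, so their `x`-intervals pairwise overlap, and emptiness makes them open towards `c`. An open
edge of a Horton set not contained in its upper part joins `x`-consecutive points; overlap leaves at
most one of these, and recursion into the upper part bounds the overlapping open edges by
`⌈log₂ n⌉`. Hence `T n ≤ T ⌈n / 2⌉ + n ⌈log₂ n⌉`, and so `T n = O(n log n)`.
-/

section Triangles

variable {s : ℝ} {a b c p q : ℝ × ℝ}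

lemma orient_rotate (a b c : ℝ × ℝ) : orient b c a = orient a b c := by
  simp only [orient]; ring

lemma orient_swap (a b c : ℝ × ℝ) : orient b a c = -orient a b c := by
  simp only [orient]; ring

lemma collinear_iff_orient_eq_zero :
    Collinear ℝ ({a, b, c} : Set (ℝ × ℝ)) ↔ orient a b c = 0 := by
  rcases eq_or_ne a b with rfl | hab
  · simp [collinear_pair, orient]
  have hlen : (b.1 - a.1) ^ 2 + (b.2 - a.2) ^ 2 ≠ 0 := fun h ↦ hab <| Prod.ext
    (by nlinarith [sq_nonneg (b.1 - a.1), sq_nonneg (b.2 - a.2)])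
    (by nlinarith [sq_nonneg (b.1 - a.1), sq_nonneg (b.2 - a.2)])
  rw [collinear_iff_of_mem (p₀ := a) (by simp)]
  refine ⟨fun ⟨v, hv⟩ ↦ ?_, fun h ↦ ⟨b - a, ?_⟩⟩
  · obtain ⟨r, rfl⟩ := hv b (by simp)
    obtain ⟨t, rfl⟩ := hv c (by simp)
    simp only [orient, vadd_eq_add, Prod.fst_add, Prod.snd_add, Prod.smul_fst, Prod.smul_snd,
      smul_eq_mul]
    ring
  · simp only [Set.mem_insert_iff, Set.mem_singleton_iff, forall_eq_or_imp, forall_eq]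
    refine ⟨⟨0, by simp⟩, ⟨1, by simp⟩, ((b.1 - a.1) * (c.1 - a.1) + (b.2 - a.2) * (c.2 - a.2)) /
      ((b.1 - a.1) ^ 2 + (b.2 - a.2) ^ 2), ?_⟩
    simp only [orient] at h
    ext
    · simp only [vadd_eq_add, Prod.fst_add, Prod.smul_fst, Prod.fst_sub, smul_eq_mul]
      field_simp
      linear_combination (a.2 - b.2) * h
    · simp only [vadd_eq_add, Prod.snd_add, Prod.smul_snd, Prod.snd_sub, smul_eq_mul]
      field_simp
      linear_combination (b.1 - a.1) * h

lemma orient_barycentric {u v w : ℝ} (h : u + v + w = 1) (hq : u • a + v • b + w • c = q) :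
    orient a b q = w * orient a b c ∧ orient b c q = u * orient a b c ∧
      orient c a q = v * orient a b c := by
  obtain rfl : u = 1 - v - w := by linarith
  subst hq
  simp only [orient, Prod.fst_add, Prod.snd_add, Prod.smul_fst, Prod.smul_snd, smul_eq_mul]
  refine ⟨?_, ?_, ?_⟩ <;> ring

lemma affineIndependent_of_mul_orient_pos (h : 0 < s * orient a b c) :
    AffineIndependent ℝ ![a, b, c] := by
  rw [affineIndependent_iff_not_collinear_set, collinear_iff_orient_eq_zero]
  exact right_ne_zero_of_mul h.ne'

lemma mem_interior_convexHull_triple_iff (h : 0 < s * orient a b c) :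
    q ∈ interior (convexHull ℝ ({a, b, c} : Set (ℝ × ℝ))) ↔
      0 < s * orient a b q ∧ 0 < s * orient b c q ∧ 0 < s * orient c a q := by
  have hind := affineIndependent_of_mul_orient_pos h
  let T : AffineBasis (Fin 3) ℝ (ℝ × ℝ) :=
    ⟨![a, b, c], hind, hind.affineSpan_eq_top_iff_card_eq_finrank_add_one.2 (by simp)⟩
  have hrange : Set.range T = {a, b, c} := by
    change Set.range ![a, b, c] = _
    simp only [Matrix.range_cons, Matrix.range_empty, Set.singleton_union, insert_empty_eq]
  have hsum := T.sum_coord_apply_eq_one q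
  have hcomb := T.linear_combination_coord_eq_self q
  rw [Fin.sum_univ_three] at hsum hcomb
  change T.coord 0 q • a + T.coord 1 q • b + T.coord 2 q • c = q at hcomb
  obtain ⟨hab, hbc, hca⟩ := orient_barycentric hsum hcomb
  have hcoord (r : ℝ) : 0 < s * (r * orient a b c) ↔ 0 < r := by
    rw [mul_left_comm, mul_pos_iff_of_pos_right h]
  rw [← hrange, T.interior_convexHull, Set.mem_ofPred_eq, Fin.forall_fin_succ, Fin.forall_fin_two,
    hab, hbc, hca, hcoord, hcoord, hcoord]
  exact and_rotate.symm

lemma convex_setOf_mul_orient_pos (s : ℝ) (a b : ℝ × ℝ) :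
    Convex ℝ {p | 0 < s * orient a b p} := by
  let f : ℝ × ℝ →ₗ[ℝ] ℝ :=
    s • ((b.1 - a.1) • LinearMap.snd ℝ ℝ ℝ - (b.2 - a.2) • LinearMap.fst ℝ ℝ ℝ)
  have hf (p : ℝ × ℝ) : s * orient a b p = f p - f a := by
    simp only [f, orient, LinearMap.smul_apply, LinearMap.sub_apply, LinearMap.snd_apply,
      LinearMap.fst_apply, smul_eq_mul]
    ring
  simpa only [hf, sub_pos] using convex_halfSpace_gt f.isLinear (f a)

lemma mul_orient_neg_of_mem_cone (habc : 0 < s * orient a b c) (hapc : 0 < s * orient a p c)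
    (hbpc : 0 < s * orient b p c) (hca : 0 < s * orient c a q) (hbc : 0 < s * orient b c q) :
    s * orient c p q < 0 := by
  have hid : (s * orient c p q) * (s * orient a b c) =
      -((s * orient a p c) * (s * orient b c q)) - (s * orient b p c) * (s * orient c a q) := by
    simp only [orient]; ring
  have h₁ := mul_pos hapc hbc
  have h₂ := mul_pos hbpc hca
  exact neg_of_mul_neg_left (by linarith) habc.le

end Triangles

section Position

variable {s : ℝ} {X Y : Set (ℝ × ℝ)}

lemma DistinctX.mono (h : DistinctX Y) (hXY : X ⊆ Y) : DistinctX X :=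
  fun a ha b hb ↦ h a (hXY ha) b (hXY hb)

lemma DistinctX.injOn_fst (h : DistinctX X) : Set.InjOn Prod.fst X :=
  fun a ha b hb hab ↦ by_contra fun hne ↦ h a ha b hb hne hab

lemma DistinctX.lt_or_gt {a b : ℝ × ℝ} (h : DistinctX X) (ha : a ∈ X) (hb : b ∈ X) (hab : a ≠ b) :
    a.1 < b.1 ∨ b.1 < a.1 :=
  lt_or_gt_of_ne (h a ha b hb hab)

/-- `Y` lies on the `s`-side of `X`: every point of `Y` is strictly above (for `s > 0`) or strictly
below (for `s < 0`) every line through two points of `X`. The sign lets one proof serve both a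
configuration and its mirror image. -/
def OnSide (s : ℝ) (X Y : Set (ℝ × ℝ)) : Prop :=
  ∀ a ∈ X, ∀ b ∈ X, a.1 < b.1 → ∀ p ∈ Y, 0 < s * orient a b p

lemma DeepBelow.onSide (h : DeepBelow X Y) : OnSide 1 X Y := fun a ha b hb hab p hp ↦ by
  have := h a ha b hb hab p hp
  simp only [StrictlyAbove, orient] at *
  linarith

lemma HighAbove.onSide (h : HighAbove Y X) : OnSide (-1) Y X := fun a ha b hb hab p hp ↦ by
  have := h a ha b hb hab p hp
  simp only [StrictlyBelow, orient] at *
  linarith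

lemma OnSide.of_subsingleton (h : X.Subsingleton) : OnSide s X Y :=
  fun _ ha _ hb hab ↦ absurd (congrArg Prod.fst (h ha hb)) hab.ne

lemma OnSide.convexHull_right (h : OnSide s X Y) : OnSide s X (convexHull ℝ Y) :=
  fun a ha b hb hab _ hp ↦
    convexHull_min (h a ha b hb hab) (convex_setOf_mul_orient_pos s a b) hp

/-- `Y` separates `X`: strictly between the `x`-coordinates of any two points of `X` there is a
point of `Y`. -/
def SeparatedBy (X Y : Set (ℝ × ℝ)) : Prop :=
  ∀ a ∈ X, ∀ b ∈ X, a.1 < b.1 → ∃ c ∈ Y, c.1 ∈ Set.Ioo a.1 b.1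

lemma SeparatedBy.of_subsingleton (h : X.Subsingleton) : SeparatedBy X Y :=
  fun _ ha _ hb hab ↦ absurd (congrArg Prod.fst (h ha hb)) hab.ne

lemma SeparatedBy.card_le {A B : Finset (ℝ × ℝ)} (h : SeparatedBy ↑A ↑B)
    (hA : DistinctX ↑A) : A.card ≤ B.card + 1 :=
  calc A.card = (A.image Prod.fst).card := (Finset.card_image_of_injOn hA.injOn_fst).symm
    _ ≤ (B.image Prod.fst).card + 1 := by
      refine Finset.card_le_of_interleaved fun x hx y hy hxy _ ↦ ?_
      obtain ⟨a, ha, rfl⟩ := Finset.mem_image.1 hx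
      obtain ⟨b, hb, rfl⟩ := Finset.mem_image.1 hy
      obtain ⟨c, hc, hac, hcb⟩ := h a ha b hb hxy
      exact ⟨c.1, Finset.mem_image_of_mem _ hc, hac, hcb⟩
    _ ≤ B.card + 1 := by gcongr; exact Finset.card_image_le

end Position

section SignedHorton

variable {s : ℝ} {A B : Finset (ℝ × ℝ)}

/-- One level of the recursive structure of a Horton set, up to mirroring: `A ∪ B` is the disjoint
union of two mutually interleaved parts, `B` being on the `s`-side of `A` and `A` on the opposite
side of `B`. -/
structure HortonSplit (s : ℝ) (A B : Finset (ℝ × ℝ)) : Prop where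
  distinctX : DistinctX ↑(A ∪ B)
  disjoint : Disjoint A B
  separatedLeft : SeparatedBy ↑A ↑B
  separatedRight : SeparatedBy ↑B ↑A
  deep : OnSide s ↑A ↑B
  high : OnSide (-s) ↑B ↑A

lemma HortonSplit.symm (h : HortonSplit s A B) : HortonSplit (-s) B A where
  distinctX := Finset.union_comm A B ▸ h.distinctX
  disjoint := h.disjoint.symm
  separatedLeft := h.separatedRight
  separatedRight := h.separatedLeft
  deep := h.high
  high := (neg_neg s).symm ▸ h.deep

lemma HortonSplit.card_left_le (h : HortonSplit s A B) : A.card ≤ ((A ∪ B).card + 1) / 2 := by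
  have := h.separatedLeft.card_le (h.distinctX.mono (by simp))
  rw [Finset.card_union_of_disjoint h.disjoint]
  omega

lemma HortonSplit.card_right_le (h : HortonSplit s A B) : B.card ≤ ((A ∪ B).card + 1) / 2 :=
  Finset.union_comm A B ▸ h.symm.card_left_le

/-- Horton sets (`s = 1`) and their mirror images in a horizontal line (`s = -1`). Unlike for
`IsHorton`, at each level either part of the split may contain the leftmost point, which makes the
class closed under mirroring. -/
inductive IsSignedHorton (s : ℝ) : Finset (ℝ × ℝ) → Prop
  | small (H : Finset (ℝ × ℝ)) (hcard : H.card ≤ 1) : IsSignedHorton s H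
  | split (A B : Finset (ℝ × ℝ)) (hcard : 2 ≤ (A ∪ B).card) (hsplit : HortonSplit s A B)
      (hA : IsSignedHorton s A) (hB : IsSignedHorton s B) : IsSignedHorton s (A ∪ B)

variable {H : Finset (ℝ × ℝ)}

lemma IsSignedHorton.distinctX (h : IsSignedHorton s H) : DistinctX ↑H := by
  cases h with
  | small _ hcard => exact fun a ha b hb hab ↦ absurd (Finset.card_le_one.1 hcard a ha b hb) hab
  | split A B _ hsplit => exact hsplit.distinctX

lemma IsSignedHorton.neg (h : IsSignedHorton s H) : IsSignedHorton (-s) H := by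
  induction h with
  | small H hcard => exact .small H hcard
  | split A B hcard hsplit _ _ ihA ihB =>
    rw [Finset.union_comm] at hcard ⊢
    exact .split B A hcard hsplit.symm ihB ihA

lemma IsSignedHorton.of_card_le_two (hx : DistinctX ↑H) (hcard : H.card ≤ 2) :
    IsSignedHorton s H := by
  rcases Nat.le_or_eq_of_le_succ hcard with hcard | hcard
  · exact .small H hcard
  obtain ⟨a, b, hab, rfl⟩ := Finset.card_eq_two.1 hcard
  refine .split {a} {b} hcard.ge ⟨hx, Finset.disjoint_singleton.2 hab, ?_, ?_, ?_, ?_⟩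
    (.small _ (by simp)) (.small _ (by simp))
  · exact .of_subsingleton (by simp)
  · exact .of_subsingleton (by simp)
  · exact .of_subsingleton (by simp)
  · exact .of_subsingleton (by simp)

/-- The number of points of `H` to the left of `p`, whose parity sorts `H` into `evenPart H` and
`oddPart H`. -/
def xRank (H : Finset (ℝ × ℝ)) (p : ℝ × ℝ) : ℕ :=
  (H.filter fun q ↦ q.1 < p.1).card

lemma mem_evenPart {p : ℝ × ℝ} : p ∈ evenPart H ↔ p ∈ H ∧ Even (xRank H p) :=
  Finset.mem_filter

lemma mem_oddPart {p : ℝ × ℝ} : p ∈ oddPart H ↔ p ∈ H ∧ ¬Even (xRank H p) :=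
  Finset.mem_filter

lemma DistinctX.exists_xRank_eq_add_one (hx : DistinctX ↑H) {a b : ℝ × ℝ} (ha : a ∈ H) (hb : b ∈ H)
    (hab : a.1 < b.1) : ∃ c ∈ H, c.1 ∈ Set.Ioc a.1 b.1 ∧ xRank H c = xRank H a + 1 := by
  obtain ⟨c, hc, hmin⟩ := Finset.exists_min_image (H.filter fun p ↦ a.1 < p.1) Prod.fst
    ⟨b, Finset.mem_filter.2 ⟨hb, hab⟩⟩
  obtain ⟨hcH, hac⟩ := Finset.mem_filter.1 hc
  have hpred : (H.filter fun p ↦ p.1 < c.1) = insert a (H.filter fun p ↦ p.1 < a.1) := by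
    ext p
    simp only [Finset.mem_filter, Finset.mem_insert]
    constructor
    · rintro ⟨hp, hpc⟩
      refine or_iff_not_imp_left.2 fun hpa ↦
        ⟨hp, (hx.lt_or_gt hp ha hpa).resolve_right fun hap ↦ ?_⟩
      exact (hmin p (Finset.mem_filter.2 ⟨hp, hap⟩)).not_gt hpc
    · rintro (rfl | ⟨hp, hpa⟩)
      exacts [⟨ha, hac⟩, ⟨hp, hpa.trans hac⟩]
  refine ⟨c, hcH, ⟨hac, hmin b (Finset.mem_filter.2 ⟨hb, hab⟩)⟩, ?_⟩
  rw [xRank, hpred, Finset.card_insert_of_notMem (by simp), xRank]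

lemma DistinctX.exists_between_of_even_iff (hx : DistinctX ↑H) {a b : ℝ × ℝ} (ha : a ∈ H)
    (hb : b ∈ H) (hab : a.1 < b.1) (hpar : Even (xRank H a) ↔ Even (xRank H b)) :
    ∃ c ∈ H, c.1 ∈ Set.Ioo a.1 b.1 ∧ (Even (xRank H c) ↔ ¬Even (xRank H a)) := by
  obtain ⟨c, hc, ⟨hac, hcb⟩, hrank⟩ := hx.exists_xRank_eq_add_one ha hb hab
  have hflip : Even (xRank H c) ↔ ¬Even (xRank H a) := by rw [hrank, Nat.even_add_one]
  have hne : c ≠ b := by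
    rintro rfl
    tauto
  exact ⟨c, hc, ⟨hac, hcb.lt_of_ne (hx c hc b hb hne)⟩, hflip⟩

lemma separatedBy_evenPart_oddPart (hx : DistinctX ↑H) :
    SeparatedBy ↑(evenPart H) ↑(oddPart H) := by
  intro a ha b hb hab
  obtain ⟨haH, ha⟩ := mem_evenPart.1 ha
  obtain ⟨hbH, hb⟩ := mem_evenPart.1 hb
  obtain ⟨c, hc, hbetween, hflip⟩ := hx.exists_between_of_even_iff haH hbH hab (iff_of_true ha hb)
  exact ⟨c, mem_oddPart.2 ⟨hc, by simpa [ha] using hflip⟩, hbetween⟩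

lemma separatedBy_oddPart_evenPart (hx : DistinctX ↑H) :
    SeparatedBy ↑(oddPart H) ↑(evenPart H) := by
  intro a ha b hb hab
  obtain ⟨haH, ha⟩ := mem_oddPart.1 ha
  obtain ⟨hbH, hb⟩ := mem_oddPart.1 hb
  obtain ⟨c, hc, hbetween, hflip⟩ := hx.exists_between_of_even_iff haH hbH hab (iff_of_false ha hb)
  exact ⟨c, mem_evenPart.2 ⟨hc, hflip.2 ha⟩, hbetween⟩

lemma evenPart_union_oddPart (H : Finset (ℝ × ℝ)) : evenPart H ∪ oddPart H = H :=
  Finset.filter_union_filter_not_eq _ _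

lemma IsHorton.isSignedHorton (h : IsHorton H) : IsSignedHorton 1 H := by
  induction h with
  | small H _ hx hcard => exact .of_card_le_two hx hcard
  | split H _ hx hcard _ _ hhigh hdeep ihEven ihOdd =>
    have hsplit : HortonSplit 1 (evenPart H) (oddPart H) :=
      { distinctX := (evenPart_union_oddPart H).symm ▸ hx
        disjoint := Finset.disjoint_filter_filter_not _ _ _
        separatedLeft := separatedBy_evenPart_oddPart hx
        separatedRight := separatedBy_oddPart_evenPart hx
        deep := hdeep.onSide
        high := hhigh.onSide }
    rw [← evenPart_union_oddPart H] at hcard ⊢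
    exact .split _ _ hcard.le hsplit ihEven ihOdd

end SignedHorton

section OpenEdges

variable {s : ℝ} {H A B : Finset (ℝ × ℝ)} {e f : (ℝ × ℝ) × (ℝ × ℝ)}

/-- The segment from `e.1` to `e.2`, listed from left to right, is an edge of `H` that is open on
its `s`-side: no point of `H` in its vertical strip lies on that side. -/
structure IsOpenEdge (s : ℝ) (H : Finset (ℝ × ℝ)) (e : (ℝ × ℝ) × (ℝ × ℝ)) : Prop where
  left_mem : e.1 ∈ H
  right_mem : e.2 ∈ H
  lt : e.1.1 < e.2.1
  mul_orient_nonpos : ∀ p ∈ H, p.1 ∈ Set.Ioo e.1.1 e.2.1 → s * orient e.1 e.2 p ≤ 0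

/-- The open `x`-intervals spanned by any two edges in `F` overlap. -/
def PairwiseOverlapping (F : Finset ((ℝ × ℝ) × (ℝ × ℝ))) : Prop :=
  ∀ e ∈ F, ∀ f ∈ F, f.1.1 < e.2.1

lemma PairwiseOverlapping.mono {F G : Finset ((ℝ × ℝ) × (ℝ × ℝ))} (h : PairwiseOverlapping G)
    (hFG : F ⊆ G) : PairwiseOverlapping F :=
  fun e he f hf ↦ h e (hFG he) f (hFG hf)

lemma HortonSplit.mem_and_mem_or_of_isOpenEdge (h : HortonSplit s A B)
    (he : IsOpenEdge s (A ∪ B) e) (hB : ¬(e.1 ∈ B ∧ e.2 ∈ B)) :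
    (e.1 ∈ A ∧ e.2 ∈ B) ∨ (e.1 ∈ B ∧ e.2 ∈ A) := by
  have hA : ¬(e.1 ∈ A ∧ e.2 ∈ A) := by
    rintro ⟨h₁, h₂⟩
    obtain ⟨c, hc, hbetween⟩ := h.separatedLeft _ h₁ _ h₂ he.lt
    exact (h.deep _ h₁ _ h₂ he.lt c hc).not_ge
      (he.mul_orient_nonpos c (Finset.mem_union_right A hc) hbetween)
  have h₁ := Finset.mem_union.1 he.left_mem
  have h₂ := Finset.mem_union.1 he.right_mem
  tauto

lemma HortonSplit.notMem_Ioo_of_mem_right (h : HortonSplit s A B) (he : IsOpenEdge s (A ∪ B) e)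
    (hmix : (e.1 ∈ A ∧ e.2 ∈ B) ∨ (e.1 ∈ B ∧ e.2 ∈ A)) {p : ℝ × ℝ} (hp : p ∈ B) :
    p.1 ∉ Set.Ioo e.1.1 e.2.1 := by
  intro hbetween
  refine (he.mul_orient_nonpos p (Finset.mem_union_right A hp) hbetween).not_gt ?_
  -- The line through `p` and the endpoint in `B` has the endpoint in `A` on its `-s`-side.
  rcases hmix with ⟨h₁, h₂⟩ | ⟨h₁, h₂⟩
  · have := h.high p hp e.2 h₂ hbetween.2 e.1 h₁
    rw [← orient_rotate, orient_swap] at this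
    linarith
  · have := h.high e.1 h₁ p hp hbetween.1 e.2 h₂
    rw [← orient_rotate, orient_swap, orient_rotate] at this
    linarith

lemma HortonSplit.notMem_Ioo_of_isOpenEdge (h : HortonSplit s A B) (he : IsOpenEdge s (A ∪ B) e)
    (hB : ¬(e.1 ∈ B ∧ e.2 ∈ B)) {p : ℝ × ℝ} (hp : p ∈ A ∪ B) : p.1 ∉ Set.Ioo e.1.1 e.2.1 := by
  have hmix := h.mem_and_mem_or_of_isOpenEdge he hB
  have hnot {c} (hc : c ∈ B) := h.notMem_Ioo_of_mem_right he hmix hc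
  rcases Finset.mem_union.1 hp with hp | hp
  · rintro ⟨hp₁, hp₂⟩
    rcases hmix with ⟨h₁, -⟩ | ⟨-, h₂⟩
    · obtain ⟨c, hc, hc₁, hc₂⟩ := h.separatedLeft _ h₁ _ hp hp₁
      exact hnot hc ⟨hc₁, hc₂.trans hp₂⟩
    · obtain ⟨c, hc, hc₁, hc₂⟩ := h.separatedLeft _ hp _ h₂ hp₂
      exact hnot hc ⟨hp₁.trans hc₁, hc₂⟩
  · exact hnot hp

lemma eq_of_overlap_of_notMem_Ioo (hx : DistinctX ↑H) (he : IsOpenEdge s H e)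
    (hf : IsOpenEdge s H f) (hef : f.1.1 < e.2.1) (hfe : e.1.1 < f.2.1)
    (he' : ∀ p ∈ H, p.1 ∉ Set.Ioo e.1.1 e.2.1) (hf' : ∀ p ∈ H, p.1 ∉ Set.Ioo f.1.1 f.2.1) :
    e = f := by
  have hleft : e.1 = f.1 := by
    by_contra hne
    rcases hx.lt_or_gt he.left_mem hf.left_mem hne with hlt | hlt
    · exact he' _ hf.left_mem ⟨hlt, hef⟩
    · exact hf' _ he.left_mem ⟨hlt, hfe⟩
  have hright : e.2 = f.2 := by
    by_contra hne
    rcases hx.lt_or_gt he.right_mem hf.right_mem hne with hlt | hlt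
    · exact hf' _ he.right_mem ⟨hef, hlt⟩
    · exact he' _ hf.right_mem ⟨hfe, hlt⟩
  exact Prod.ext hleft hright

lemma HortonSplit.card_filter_isOpenEdge_le_one (h : HortonSplit s A B)
    {F : Finset ((ℝ × ℝ) × (ℝ × ℝ))} (hF : ∀ e ∈ F, IsOpenEdge s (A ∪ B) e)
    (hover : PairwiseOverlapping F) : (F.filter fun e ↦ ¬(e.1 ∈ B ∧ e.2 ∈ B)).card ≤ 1 := by
  refine Finset.card_le_one.2 fun e he f hf ↦ ?_
  obtain ⟨heF, heB⟩ := Finset.mem_filter.1 he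
  obtain ⟨hfF, hfB⟩ := Finset.mem_filter.1 hf
  exact eq_of_overlap_of_notMem_Ioo h.distinctX (hF e heF) (hF f hfF) (hover e heF f hfF)
    (hover f hfF e heF) (fun _ ↦ h.notMem_Ioo_of_isOpenEdge (hF e heF) heB)
    (fun _ ↦ h.notMem_Ioo_of_isOpenEdge (hF f hfF) hfB)

lemma clog_two_add_one_le {m n : ℕ} (hn : 2 ≤ n) (hmn : m ≤ (n + 1) / 2) :
    Nat.clog 2 m + 1 ≤ Nat.clog 2 n := by
  rw [Nat.clog_of_two_le one_lt_two hn]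
  gcongr
  exact hmn

lemma IsSignedHorton.card_openEdges_le (h : IsSignedHorton s H) {F : Finset ((ℝ × ℝ) × (ℝ × ℝ))}
    (hF : ∀ e ∈ F, IsOpenEdge s H e) (hover : PairwiseOverlapping F) :
    F.card ≤ Nat.clog 2 H.card := by
  induction h generalizing F with
  | small H hcard =>
    suffices hF₀ : F = ∅ by simp [hF₀]
    refine Finset.eq_empty_of_forall_notMem fun e he ↦ (hF e he).lt.ne ?_
    rw [Finset.card_le_one.1 hcard _ (hF e he).left_mem _ (hF e he).right_mem]
  | split A B hcard hsplit _ _ _ ihB =>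
    have hin : (F.filter fun e ↦ e.1 ∈ B ∧ e.2 ∈ B).card ≤ Nat.clog 2 B.card := by
      refine ihB (fun e he ↦ ?_) (hover.mono (Finset.filter_subset _ _))
      obtain ⟨heF, h₁, h₂⟩ := Finset.mem_filter.1 he
      exact ⟨h₁, h₂, (hF e heF).lt,
        fun p hp ↦ (hF e heF).mul_orient_nonpos p (Finset.mem_union_right A hp)⟩
    calc F.card = (F.filter fun e ↦ e.1 ∈ B ∧ e.2 ∈ B).card +
          (F.filter fun e ↦ ¬(e.1 ∈ B ∧ e.2 ∈ B)).card :=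
        (Finset.card_filter_add_card_filter_not _).symm
      _ ≤ Nat.clog 2 B.card + 1 := add_le_add hin (hsplit.card_filter_isOpenEdge_le_one hF hover)
      _ ≤ Nat.clog 2 (A ∪ B).card := clog_two_add_one_le hcard hsplit.card_right_le

end OpenEdges

section Stabbing

variable {s : ℝ} {H A B : Finset (ℝ × ℝ)} {q c : ℝ × ℝ} {t : Finset (ℝ × ℝ)}

/-- The empty triangles of `H` stabbed by `q`, as a finite set. -/
def stabbedTriangles (H : Finset (ℝ × ℝ)) (q : ℝ × ℝ) : Finset (Finset (ℝ × ℝ)) :=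
  H.powerset.filter fun t ↦ IsEmptyTriangleOf ↑H t ∧
    q ∈ interior (convexHull ℝ (↑t : Set (ℝ × ℝ)))

lemma mem_stabbedTriangles : t ∈ stabbedTriangles H q ↔
    IsEmptyTriangleOf ↑H t ∧ q ∈ interior (convexHull ℝ (↑t : Set (ℝ × ℝ))) := by
  simp only [stabbedTriangles, Finset.mem_filter, Finset.mem_powerset, and_iff_right_iff_imp]
  exact fun h ↦ Finset.coe_subset.1 h.1.2.1

lemma stabbedCount_eq_card (H : Finset (ℝ × ℝ)) (q : ℝ × ℝ) :
    stabbedCount ↑H q = (stabbedTriangles H q).card := by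
  rw [stabbedCount, ← Set.ncard_coe_finset]
  congr 1
  ext t
  exact mem_stabbedTriangles.symm

lemma mem_stabbedTriangles_of_subset (hAH : A ⊆ H) (ht : t ∈ stabbedTriangles H q) (htA : t ⊆ A) :
    t ∈ stabbedTriangles A q := by
  obtain ⟨⟨hcard, -, hnc, hempty⟩, hq⟩ := mem_stabbedTriangles.1 ht
  exact mem_stabbedTriangles.2
    ⟨⟨hcard, Finset.coe_subset.2 htA, hnc, fun p hp ↦ hempty p (hAH hp)⟩, hq⟩

lemma stabbedTriangles_eq_empty_of_card_le_two (hcard : H.card ≤ 2) :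
    stabbedTriangles H q = ∅ := by
  refine Finset.eq_empty_of_forall_notMem fun t ht ↦ ?_
  obtain ⟨⟨ht3, htH, -⟩, -⟩ := mem_stabbedTriangles.1 ht
  have := Finset.card_le_card (Finset.coe_subset.1 htH)
  omega

lemma exists_leftmost_of_card_eq_three (hx : DistinctX ↑t) (ht : t.card = 3) :
    ∃ a b c, t = {a, b, c} ∧ a.1 < b.1 ∧ a.1 < c.1 := by
  obtain ⟨a, ha, hmin⟩ := t.exists_min_image Prod.fst (Finset.card_pos.1 (by omega))
  obtain ⟨b, c, -, hbc⟩ := Finset.card_eq_two.1 (by rw [Finset.card_erase_of_mem ha, ht] :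
    (t.erase a).card = 2)
  have hlt (p) (hp : p ∈ t.erase a) : a.1 < p.1 := by
    obtain ⟨hpa, hpt⟩ := Finset.mem_erase.1 hp
    exact (hmin p hpt).lt_of_ne (hx a ha p hpt hpa.symm)
  exact ⟨a, b, c, by rw [← hbc, Finset.insert_erase ha], hlt b (by simp [hbc]),
    hlt c (by simp [hbc])⟩

lemma OnSide.stabbedTriangles_eq_empty (h : OnSide s ↑A {q}) (hx : DistinctX ↑A) :
    stabbedTriangles A q = ∅ := by
  refine Finset.eq_empty_of_forall_notMem fun t ht ↦ ?_
  obtain ⟨⟨ht3, htA, hnc, -⟩, hq⟩ := mem_stabbedTriangles.1 ht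
  obtain ⟨a, b, c, rfl, hab, hac⟩ := exists_leftmost_of_card_eq_three (hx.mono htA) ht3
  simp only [Finset.coe_insert, Finset.coe_singleton] at htA hnc hq
  have hD : 0 < orient a b c * orient a b c :=
    mul_self_pos.2 (mt collinear_iff_orient_eq_zero.2 hnc)
  -- A stabbing point sees `b` and `c` on different sides from `a`.
  obtain ⟨habq, -, hcaq⟩ := (mem_interior_convexHull_triple_iff hD).1 hq
  have hb := h a (htA (by simp)) b (htA (by simp)) hab q rfl
  have hc := h a (htA (by simp)) c (htA (by simp)) hac q rfl
  rw [orient_swap a c] at hcaq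
  have h₁ := mul_pos hb hcaq
  have h₂ := mul_pos hc habq
  nlinarith

lemma HortonSplit.stabbedTriangles_eq_empty_or (h : HortonSplit s A B) (q : ℝ × ℝ) :
    stabbedTriangles A q = ∅ ∨ stabbedTriangles B q = ∅ := by
  refine or_iff_not_imp_right.2 fun hB ↦ ?_
  obtain ⟨t, ht⟩ := Finset.nonempty_iff_ne_empty.2 hB
  obtain ⟨⟨-, htB, -⟩, hq⟩ := mem_stabbedTriangles.1 ht
  have hqB : q ∈ convexHull ℝ (B : Set (ℝ × ℝ)) := convexHull_mono htB (interior_subset hq)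
  refine OnSide.stabbedTriangles_eq_empty (s := s) (fun a ha b hb hab p hp ↦ ?_)
    (h.distinctX.mono (by simp))
  exact h.deep.convexHull_right a ha b hb hab p (hp ▸ hqB)

/-- The edges of `A` that form, together with the apex `c`, an empty triangle of `H` stabbed by `q`.
Each edge is listed from left to right. -/
def stabbedBases (H A : Finset (ℝ × ℝ)) (q c : ℝ × ℝ) : Finset ((ℝ × ℝ) × (ℝ × ℝ)) :=
  (A ×ˢ A).filter fun e ↦ e.1.1 < e.2.1 ∧ {e.1, e.2, c} ∈ stabbedTriangles H q

lemma mem_stabbedBases {e : (ℝ × ℝ) × (ℝ × ℝ)} : e ∈ stabbedBases H A q c ↔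
    (e.1 ∈ A ∧ e.2 ∈ A) ∧ e.1.1 < e.2.1 ∧ {e.1, e.2, c} ∈ stabbedTriangles H q := by
  rw [stabbedBases, Finset.mem_filter, Finset.mem_product]

lemma OnSide.isOpenEdge_of_mem_stabbedBases (h : OnSide s ↑A {c}) (hAH : A ⊆ H)
    {e : (ℝ × ℝ) × (ℝ × ℝ)} (he : e ∈ stabbedBases H A q c) : IsOpenEdge s A e := by
  obtain ⟨⟨h₁, h₂⟩, hlt, ht⟩ := mem_stabbedBases.1 he
  refine ⟨h₁, h₂, hlt, fun p hp ⟨hp₁, hp₂⟩ ↦ not_lt.1 fun hpos ↦ ?_⟩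
  apply (mem_stabbedTriangles.1 ht).1.2.2.2 p (hAH hp)
  simp only [Finset.coe_insert, Finset.coe_singleton]
  rw [mem_interior_convexHull_triple_iff (h _ h₁ _ h₂ hlt c rfl), orient_rotate p e.2 c,
    ← orient_rotate c e.1 p]
  exact ⟨hpos, h p hp _ h₂ hp₂ c rfl, h _ h₁ p hp hp₁ c rfl⟩

lemma OnSide.mul_orient_pos_of_mem_stabbedBases (h : OnSide s ↑A {c})
    {e : (ℝ × ℝ) × (ℝ × ℝ)} (he : e ∈ stabbedBases H A q c) :
    0 < s * orient e.2 c q ∧ 0 < s * orient c e.1 q := by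
  obtain ⟨⟨h₁, h₂⟩, hlt, ht⟩ := mem_stabbedBases.1 he
  have hq := (mem_stabbedTriangles.1 ht).2
  simp only [Finset.coe_insert, Finset.coe_singleton] at hq
  exact ((mem_interior_convexHull_triple_iff (h _ h₁ _ h₂ hlt c rfl)).1 hq).2

-- Seen from `c`, the points of `A` appear in the order of their `x`-coordinates, and every base
-- crosses the ray from `c` through `q`.
lemma OnSide.pairwiseOverlapping_stabbedBases (h : OnSide s ↑A {c}) (hx : DistinctX ↑A) :
    PairwiseOverlapping (stabbedBases H A q c) := by
  intro e he f hf
  obtain ⟨⟨he₁, he₂⟩, hlt, -⟩ := mem_stabbedBases.1 he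
  obtain ⟨⟨hf₁, -⟩, -, -⟩ := mem_stabbedBases.1 hf
  obtain ⟨heq, heq'⟩ := h.mul_orient_pos_of_mem_stabbedBases he
  obtain ⟨-, hfq⟩ := h.mul_orient_pos_of_mem_stabbedBases hf
  by_contra! hle
  rcases eq_or_ne e.2 f.1 with heqf | hne
  · rw [orient_swap c, heqf] at heq
    linarith
  · have hgt := (hx.lt_or_gt he₂ hf₁ hne).resolve_right hle.not_gt
    exact hfq.not_gt (mul_orient_neg_of_mem_cone (h _ he₁ _ he₂ hlt c rfl)
      (h _ he₁ _ hf₁ (hlt.trans hgt) c rfl) (h _ he₂ _ hf₁ hgt c rfl) heq' heq)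

lemma IsSignedHorton.card_stabbedBases_le (hA : IsSignedHorton s A) (h : OnSide s ↑A {c})
    (hAH : A ⊆ H) : (stabbedBases H A q c).card ≤ Nat.clog 2 A.card :=
  hA.card_openEdges_le (fun _ ↦ h.isOpenEdge_of_mem_stabbedBases hAH)
    (h.pairwiseOverlapping_stabbedBases hA.distinctX)

/-- The empty triangles of `H` stabbed by `q` with an edge in `A` and the third vertex in `B`. -/
def mixedTriangles (H A B : Finset (ℝ × ℝ)) (q : ℝ × ℝ) : Finset (Finset (ℝ × ℝ)) :=
  B.biUnion fun c ↦ (stabbedBases H A q c).image fun e ↦ {e.1, e.2, c}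

lemma IsSignedHorton.card_mixedTriangles_le (hA : IsSignedHorton s A) (h : OnSide s ↑A ↑B)
    (hAH : A ⊆ H) : (mixedTriangles H A B q).card ≤ B.card * Nat.clog 2 A.card := by
  refine Finset.card_biUnion_le_card_mul _ _ _ fun c hc ↦ Finset.card_image_le.trans ?_
  refine hA.card_stabbedBases_le (fun a ha b hb hab p hp ↦ ?_) hAH
  exact h a ha b hb hab p (hp ▸ hc)

lemma mem_mixedTriangles (hx : DistinctX ↑A) (ht : t ∈ stabbedTriangles H q) (hct : c ∈ t)
    (hc : c ∈ B) (hA : t.erase c ⊆ A) : t ∈ mixedTriangles H A B q := by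
  have ht3 := (mem_stabbedTriangles.1 ht).1.1
  obtain ⟨a, b, hne, hab⟩ := Finset.card_eq_two.1 (by rw [Finset.card_erase_of_mem hct, ht3] :
    (t.erase c).card = 2)
  have hbase (a b : ℝ × ℝ) (hab : t.erase c = {a, b}) (hlt : a.1 < b.1) :
      t ∈ mixedTriangles H A B q := by
    have ht' : {a, b, c} = t := by
      rw [← Finset.insert_erase hct, hab, Finset.insert_comm c, Finset.pair_comm c]
    rw [hab, Finset.insert_subset_iff, Finset.singleton_subset_iff] at hA
    exact Finset.mem_biUnion.2 ⟨c, hc, Finset.mem_image.2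
      ⟨(a, b), mem_stabbedBases.2 ⟨hA, hlt, ht' ▸ ht⟩, ht'⟩⟩
  rcases hx.lt_or_gt (hA (by simp [hab])) (hA (by simp [hab])) hne with hlt | hlt
  · exact hbase a b hab hlt
  · exact hbase b a (hab.trans (Finset.pair_comm a b)) hlt

lemma subset_or_erase_subset_of_card_sdiff_le_one (htAB : t ⊆ A ∪ B) (hcard : (t \ A).card ≤ 1) :
    t ⊆ A ∨ ∃ c ∈ t, c ∈ B ∧ t.erase c ⊆ A := by
  refine or_iff_not_imp_left.2 fun htA ↦ ?_
  obtain ⟨c, hct, hcA⟩ := Finset.not_subset.1 htA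
  refine ⟨c, hct, (Finset.mem_union.1 (htAB hct)).resolve_left hcA, fun p hp ↦ ?_⟩
  obtain ⟨hpc, hpt⟩ := Finset.mem_erase.1 hp
  by_contra hpA
  exact hpc (Finset.card_le_one.1 hcard p (Finset.mem_sdiff.2 ⟨hpt, hpA⟩) c
    (Finset.mem_sdiff.2 ⟨hct, hcA⟩))

lemma card_sdiff_add_card_sdiff_le (htAB : t ⊆ A ∪ B) :
    (t \ A).card + (t \ B).card ≤ t.card := by
  have hdisj : Disjoint (t \ A) (t \ B) := by
    rw [Finset.disjoint_iff_inter_eq_empty, ← Finset.sdiff_union_distrib,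
      Finset.sdiff_eq_empty_iff_subset]
    exact htAB
  rw [← Finset.card_union_of_disjoint hdisj]
  exact Finset.card_le_card (Finset.union_subset Finset.sdiff_subset Finset.sdiff_subset)

lemma HortonSplit.stabbedTriangles_subset (h : HortonSplit s A B) (q : ℝ × ℝ) :
    stabbedTriangles (A ∪ B) q ⊆ (stabbedTriangles A q ∪ stabbedTriangles B q) ∪
      (mixedTriangles (A ∪ B) A B q ∪ mixedTriangles (A ∪ B) B A q) := by
  intro t ht
  obtain ⟨⟨ht3, htAB, -⟩, -⟩ := mem_stabbedTriangles.1 ht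
  rw [Finset.coe_subset] at htAB
  have hcard := card_sdiff_add_card_sdiff_le htAB
  have hmajority : (t \ A).card ≤ 1 ∨ (t \ B).card ≤ 1 := by omega
  simp only [Finset.mem_union]
  rcases hmajority with hA | hB
  · rcases subset_or_erase_subset_of_card_sdiff_le_one htAB hA with htA | ⟨c, hct, hc, hA⟩
    · exact .inl (.inl (mem_stabbedTriangles_of_subset Finset.subset_union_left ht htA))
    · exact .inr (.inl (mem_mixedTriangles (h.distinctX.mono (by simp)) ht hct hc hA))
  · rw [Finset.union_comm] at htAB
    rcases subset_or_erase_subset_of_card_sdiff_le_one htAB hB with htB | ⟨c, hct, hc, hB⟩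
    · exact .inl (.inr (mem_stabbedTriangles_of_subset Finset.subset_union_right ht htB))
    · exact .inr (.inr (mem_mixedTriangles (h.distinctX.mono (by simp)) ht hct hc hB))

lemma HortonSplit.card_mixedTriangles_add_le (h : HortonSplit s A B) (hA : IsSignedHorton s A)
    (hB : IsSignedHorton s B) (q : ℝ × ℝ) :
    (mixedTriangles (A ∪ B) A B q).card + (mixedTriangles (A ∪ B) B A q).card ≤
      (A ∪ B).card * Nat.clog 2 (A ∪ B).card :=
  calc _ ≤ B.card * Nat.clog 2 A.card + A.card * Nat.clog 2 B.card :=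
        add_le_add (hA.card_mixedTriangles_le h.deep Finset.subset_union_left)
          (hB.neg.card_mixedTriangles_le h.high Finset.subset_union_right)
    _ ≤ B.card * Nat.clog 2 (A ∪ B).card + A.card * Nat.clog 2 (A ∪ B).card := by
        gcongr
        exacts [Finset.subset_union_left, Finset.subset_union_right]
    _ = (A ∪ B).card * Nat.clog 2 (A ∪ B).card := by
        rw [Finset.card_union_of_disjoint h.disjoint]
        ring

theorem IsSignedHorton.card_stabbedTriangles_le (h : IsSignedHorton s H) (q : ℝ × ℝ) :
    (stabbedTriangles H q).card ≤ 3 * H.card * Nat.clog 2 H.card := by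
  induction h with
  | small H hcard => simp [stabbedTriangles_eq_empty_of_card_le_two (hcard.trans one_le_two)]
  | split A B hcard hsplit hA hB ihA ihB =>
    set n := (A ∪ B).card
    have hpure : (stabbedTriangles A q ∪ stabbedTriangles B q).card ≤
        3 * ((n + 1) / 2) * Nat.clog 2 n := by
      rcases hsplit.stabbedTriangles_eq_empty_or q with hempty | hempty
      · rw [hempty, Finset.empty_union]
        refine ihB.trans ?_
        gcongr
        exacts [hsplit.card_right_le, Finset.card_le_card Finset.subset_union_right]
      · rw [hempty, Finset.union_empty]
        refine ihA.trans ?_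
        gcongr
        exacts [hsplit.card_left_le, Finset.card_le_card Finset.subset_union_left]
    calc (stabbedTriangles (A ∪ B) q).card
        ≤ (stabbedTriangles A q ∪ stabbedTriangles B q).card +
          (mixedTriangles (A ∪ B) A B q ∪ mixedTriangles (A ∪ B) B A q).card :=
          (Finset.card_le_card (hsplit.stabbedTriangles_subset q)).trans (Finset.card_union_le _ _)
      _ ≤ 3 * ((n + 1) / 2) * Nat.clog 2 n + n * Nat.clog 2 n :=
          add_le_add hpure ((Finset.card_union_le _ _).trans
            (hsplit.card_mixedTriangles_add_le hA hB q))
      _ = (3 * ((n + 1) / 2) + n) * Nat.clog 2 n := by ring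
      _ ≤ 3 * n * Nat.clog 2 n := by
          gcongr
          omega

end Stabbing

lemma clog_two_le_mul_log {n : ℕ} (hn : 2 ≤ n) :
    (Nat.clog 2 n : ℝ) ≤ 2 / Real.log 2 * Real.log n := by
  have hone : 1 ≤ Real.logb 2 n := by
    rw [Real.le_logb_iff_rpow_le one_lt_two (by positivity), Real.rpow_one]
    exact_mod_cast hn
  calc (Nat.clog 2 n : ℝ) = ⌈Real.logb 2 n⌉₊ := by
        rw [← Real.natCeil_logb_natCast, Nat.cast_ofNat]
    _ ≤ Real.logb 2 n + 1 := (Nat.ceil_lt_add_one (by linarith)).le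
    _ ≤ 2 * Real.logb 2 n := by linarith
    _ = 2 / Real.log 2 * Real.log n := by rw [Real.logb]; ring

/-- Every point of the plane stabs `O(n log n)` empty triangles of a Horton set of `n` points. -/
theorem horton_stabbed_bound :
    ∃ C : ℝ, 0 < C ∧ ∀ H : Finset (ℝ × ℝ), IsHorton H → 2 ≤ H.card →
      ∀ q : ℝ × ℝ,
        (stabbedCount ↑H q : ℝ) ≤ C * (H.card : ℝ) * Real.log (H.card : ℝ) := by
  refine ⟨6 / Real.log 2, by positivity, fun H hH hcard q ↦ ?_⟩
  calc (stabbedCount ↑H q : ℝ) = (stabbedTriangles H q).card := by rw [stabbedCount_eq_card]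
    _ ≤ 3 * H.card * Nat.clog 2 H.card := by
        exact_mod_cast hH.isSignedHorton.card_stabbedTriangles_le q
    _ ≤ 3 * H.card * (2 / Real.log 2 * Real.log H.card) := by
        gcongr
        exact clog_two_le_mul_log hcard
    _ = 6 / Real.log 2 * H.card * Real.log H.card := by ring
end
end

section
/- Let Δ be a triangle with vertices in ℤ × ℤ. If two edges of Δ each contain at least two points of ℤ × ℤ in their relative interiors, then there is a point of ℤ × ℤ in the interior of Δ. -/
open scoped Classical

noncomputable section

/-- The canonical embedding of the integer lattice `ℤ × ℤ` into the plane. -/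
def toR (p : ℤ × ℤ) : ℝ × ℝ := ((p.1 : ℝ), (p.2 : ℝ))

/-- A point of the plane is a lattice point if it lies in `ℤ × ℤ`. -/
def IsLatticePt (p : ℝ × ℝ) : Prop := ∃ q : ℤ × ℤ, p = toR q

/-- The open segment `pq` contains at least two lattice points. -/
def TwoLatticeInOpenSeg (p q : ℝ × ℝ) : Prop :=
  ∃ u v : ℝ × ℝ, u ≠ v ∧ IsLatticePt u ∧ IsLatticePt v ∧
    u ∈ openSegment ℝ p q ∧ v ∈ openSegment ℝ p q

/-!
The scalars `r` with `r • (q - p)` in the lattice form an additive subgroup of `ℝ`. If the open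
edge from `p` to `q` carries `n` lattice points, then this subgroup has `n` elements in `(0, 1)`;
together with `0` and `1` they leave `n + 1` gaps, the least of which is an element
`r ≤ 1 / (n + 1)`. For a simplex of dimension `d` whose `d` edges at a vertex `v` each carry `d`
lattice points, the sum of the resulting lattice vectors `rⱼ • (vⱼ - v)` therefore has total weight
at most `d / (d + 1) < 1`, and adding it to `v` gives an interior lattice point.
-/

theorem exists_mem_pos_card_succ_nsmul_le {G : Type*} [AddCommGroup G] [LinearOrder G]
    [IsOrderedAddMonoid G] (S : AddSubgroup G) {T : Finset G} {l : G} (hl : l ∈ S) (hl₀ : 0 < l)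
    (hT : (T : Set G) ⊆ ↑S ∩ Set.Ioo 0 l) :
    ∃ r ∈ S, 0 < r ∧ (T.card + 1) • r ≤ l := by
  induction T using Finset.induction_on_max generalizing l with
  | empty => exact ⟨l, hl, hl₀, by simp⟩
  | insert a T ha ih =>
    have haT : a ∉ T := fun h => (ha a h).false
    rw [Finset.coe_insert, Set.insert_subset_iff] at hT
    obtain ⟨⟨haS, ha₀, hal⟩, hTl⟩ := hT
    obtain ⟨r, hr, hr₀, hra⟩ := ih haS ha₀ fun t ht => ⟨(hTl ht).1, (hTl ht).2.1, ha t ht⟩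
    refine ⟨min r (l - a), ?_, lt_min hr₀ (sub_pos.2 hal), ?_⟩
    · exact min_rec' (· ∈ S) hr (S.sub_mem hl haS)
    · calc ((insert a T).card + 1) • min r (l - a)
          = (T.card + 1) • min r (l - a) + min r (l - a) := by
            rw [Finset.card_insert_of_notMem haT, succ_nsmul]
        _ ≤ (T.card + 1) • r + (l - a) := by gcongr <;> simp
        _ ≤ a + (l - a) := by gcongr
        _ = l := add_sub_cancel a l

theorem exists_pos_smul_sub_mem_of_le_encard_openSegment {𝕜 E : Type*} [Field 𝕜] [LinearOrder 𝕜]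
    [IsStrictOrderedRing 𝕜] [AddCommGroup E] [Module 𝕜 E] (Λ : AddSubgroup E) {p q : E}
    (hp : p ∈ Λ) (hq : q ∈ Λ) {n : ℕ} (hn : n ≤ (↑Λ ∩ openSegment 𝕜 p q).encard) :
    ∃ r : 𝕜, 0 < r ∧ (n + 1) * r ≤ 1 ∧ r • (q - p) ∈ Λ := by
  let S : AddSubgroup 𝕜 := Λ.comap (LinearMap.toSpanSingleton 𝕜 E (q - p)).toAddMonoidHom
  have mem_S (r : 𝕜) : r ∈ S ↔ r • (q - p) ∈ Λ := Iff.rfl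
  have subset_image :
      ↑Λ ∩ openSegment 𝕜 p q ⊆ AffineMap.lineMap p q '' (↑S ∩ Set.Ioo (0 : 𝕜) 1) := by
    rw [openSegment_eq_image_lineMap]
    rintro _ ⟨hx, t, ht, rfl⟩
    refine ⟨t, ⟨?_, ht⟩, rfl⟩
    rw [SetLike.mem_coe, AffineMap.lineMap_apply_module'] at hx
    exact (mem_S t).2 ((Λ.add_mem_cancel_right hp).1 hx)
  have le_encard : (n : ℕ∞) ≤ (↑S ∩ Set.Ioo (0 : 𝕜) 1).encard :=
    hn.trans ((Set.encard_le_encard subset_image).trans (Set.encard_image_le _ _))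
  obtain ⟨T, hT, hTn⟩ := Set.exists_subset_encard_eq le_encard
  lift T to Finset 𝕜 using Set.finite_of_encard_eq_coe hTn
  rw [Set.encard_coe_eq_coe_finsetCard, Nat.cast_inj] at hTn
  have one_mem : (1 : 𝕜) ∈ S := (mem_S 1).2 (by simpa using Λ.sub_mem hq hp)
  obtain ⟨r, hr, hr₀, hr₁⟩ := exists_mem_pos_card_succ_nsmul_le S one_mem one_pos hT
  exact ⟨r, hr₀, by simpa [hTn, nsmul_eq_mul] using hr₁, hr⟩

section Simplex

variable {ι E : Type*} [NormedAddCommGroup E] [NormedSpace ℝ E] (b : AffineBasis ι ℝ E)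

theorem add_sum_smul_sub_mem_interior_convexHull [Fintype ι] (i : ι) {r : ι → ℝ}
    (hr : ∀ j ≠ i, 0 < r j) (hsum : ∑ j ∈ Finset.univ.erase i, r j < 1) :
    b i + ∑ j ∈ Finset.univ.erase i, r j • (b j - b i) ∈
      interior (convexHull ℝ (Set.range b)) := by
  rw [b.interior_convexHull]
  intro k
  have coord_eq : b.coord k (b i + ∑ j ∈ Finset.univ.erase i, r j • (b j - b i)) =
      b.coord k (b i) + ∑ j ∈ Finset.univ.erase i, r j * (b.coord k (b j) - b.coord k (b i)) := by
    rw [add_comm (b i), ← vadd_eq_add, AffineMap.map_vadd, vadd_eq_add, add_comm]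
    simp only [map_sum, map_smul, ← vsub_eq_sub, AffineMap.linearMap_vsub, smul_eq_mul]
  rw [coord_eq]
  obtain rfl | hki := eq_or_ne k i
  · have sum_eq : ∑ j ∈ Finset.univ.erase k, r j * (b.coord k (b j) - b.coord k (b k)) =
        -∑ j ∈ Finset.univ.erase k, r j := by
      rw [← Finset.sum_neg_distrib]
      refine Finset.sum_congr rfl fun j hj => ?_
      rw [b.coord_apply_eq, b.coord_apply_ne (Finset.ne_of_mem_erase hj).symm, zero_sub,
        mul_neg_one]
    rw [sum_eq, b.coord_apply_eq]
    linarith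
  · simpa [b.coord_apply, hki] using hr k hki

theorem exists_mem_interior_convexHull_of_finrank_le_encard_openSegment [Finite ι]
    (Λ : AddSubgroup E) (hb : ∀ j, b j ∈ Λ) (i : ι)
    (hedge : ∀ j ≠ i, Module.finrank ℝ E ≤ (↑Λ ∩ openSegment ℝ (b i) (b j)).encard) :
    ∃ p ∈ Λ, p ∈ interior (convexHull ℝ (Set.range b)) := by
  have := Fintype.ofFinite ι
  set d := Module.finrank ℝ E
  have exists_weight (j : ι) (hj : j ≠ i) :
      ∃ r : ℝ, 0 < r ∧ (d + 1) * r ≤ 1 ∧ r • (b j - b i) ∈ Λ :=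
    exists_pos_smul_sub_mem_of_le_encard_openSegment Λ (hb i) (hb j) (hedge j hj)
  choose! r hr₀ hr₁ hrΛ using exists_weight
  have card_erase : (Finset.univ.erase i).card = d := by
    rw [Finset.card_erase_of_mem (Finset.mem_univ i), Finset.card_univ,
      b.card_eq_finrank_add_one, Nat.add_sub_cancel]
  have weight_sum : ∑ j ∈ Finset.univ.erase i, r j < 1 := by
    refine lt_of_mul_lt_mul_left (a := (d + 1 : ℝ)) ?_ (by positivity)
    calc (d + 1) * ∑ j ∈ Finset.univ.erase i, r j
        = ∑ j ∈ Finset.univ.erase i, (d + 1) * r j := Finset.mul_sum ..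
      _ ≤ ∑ j ∈ Finset.univ.erase i, 1 :=
          Finset.sum_le_sum fun j hj => hr₁ j (Finset.ne_of_mem_erase hj)
      _ = d := by simp [card_erase]
      _ < (d + 1) * 1 := by simp
  exact ⟨_, Λ.add_mem (hb i) (Λ.sum_mem fun j hj => hrΛ j (Finset.ne_of_mem_erase hj)),
    add_sum_smul_sub_mem_interior_convexHull b i hr₀ weight_sum⟩

end Simplex

theorem lattice_point_in_triangle_of_two_rich_edges_general {E : Type*} [NormedAddCommGroup E]
    [NormedSpace ℝ E] (hE : Module.finrank ℝ E = 2) (Λ : AddSubgroup E) {a b c : E}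
    (ha : a ∈ Λ) (hb : b ∈ Λ) (hc : c ∈ Λ) (hnc : ¬ Collinear ℝ {a, b, c})
    (h2 : (2 ≤ (↑Λ ∩ openSegment ℝ a b).encard ∧ 2 ≤ (↑Λ ∩ openSegment ℝ b c).encard) ∨
      (2 ≤ (↑Λ ∩ openSegment ℝ b c).encard ∧ 2 ≤ (↑Λ ∩ openSegment ℝ a c).encard) ∨
      (2 ≤ (↑Λ ∩ openSegment ℝ a b).encard ∧ 2 ≤ (↑Λ ∩ openSegment ℝ a c).encard)) :
    ∃ p ∈ Λ, p ∈ interior (convexHull ℝ {a, b, c}) := by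
  have : FiniteDimensional ℝ E := .of_finrank_pos (by lia)
  have indep : AffineIndependent ℝ ![a, b, c] := affineIndependent_iff_not_collinear_set.2 hnc
  have span_eq_top := indep.affineSpan_eq_top_iff_card_eq_finrank_add_one.2 (by simp [hE])
  obtain ⟨β, coe_β⟩ : ∃ β : AffineBasis (Fin 3) ℝ E, ⇑β = ![a, b, c] :=
    ⟨⟨_, indep, span_eq_top⟩, rfl⟩
  have mem_Λ : ∀ j, β j ∈ Λ := by simp [coe_β, Fin.forall_fin_succ, ha, hb, hc]
  have range_β : Set.range β = {a, b, c} := by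
    rw [coe_β, Matrix.range_cons, Matrix.range_cons_cons_empty, Set.singleton_union]
  suffices ∃ i, ∀ j ≠ i, 2 ≤ (↑Λ ∩ openSegment ℝ (β i) (β j)).encard by
    obtain ⟨i, hi⟩ := this
    simpa only [range_β] using
      exists_mem_interior_convexHull_of_finrank_le_encard_openSegment β Λ mem_Λ i (by simpa [hE])
  rcases h2 with ⟨hab, hbc⟩ | ⟨hbc, hac⟩ | ⟨hab, hac⟩
  · rw [openSegment_symm] at hab
    exact ⟨1, by simp [coe_β, Fin.forall_fin_succ, hab, hbc]⟩
  · rw [openSegment_symm] at hbc hac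
    exact ⟨2, by simp [coe_β, Fin.forall_fin_succ, hac, hbc]⟩
  · exact ⟨0, by simp [coe_β, Fin.forall_fin_succ, hab, hac]⟩

/-- The integer lattice `ℤ × ℤ` as an additive subgroup of the plane, written as the range of a
homomorphism so that the results on arbitrary subgroups apply to `IsLatticePt`. -/
def intLattice : AddSubgroup (ℝ × ℝ) :=
  ((Int.castAddHom ℝ).prodMap (Int.castAddHom ℝ)).range

theorem mem_intLattice {p : ℝ × ℝ} : p ∈ intLattice ↔ IsLatticePt p := by
  simp only [intLattice, AddMonoidHom.mem_range, IsLatticePt, eq_comm (a := p)]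
  rfl

theorem toR_mem_intLattice (a : ℤ × ℤ) : toR a ∈ intLattice := ⟨a, rfl⟩

theorem twoLatticeInOpenSeg_iff_two_le_encard {p q : ℝ × ℝ} :
    TwoLatticeInOpenSeg p q ↔ 2 ≤ (↑intLattice ∩ openSegment ℝ p q).encard := by
  rw [← one_add_one_eq_two, ENat.add_one_le_iff ENat.one_ne_top, Set.one_lt_encard_iff]
  simp only [TwoLatticeInOpenSeg, Set.mem_inter_iff, SetLike.mem_coe, mem_intLattice]
  grind

/-- If two edges of a lattice triangle each contain at least two lattice points in their
relative interiors, then the triangle contains a lattice point in its interior. -/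
theorem lattice_point_in_triangle_of_two_rich_edges (a b c : ℤ × ℤ)
    (hnc : ¬ Collinear ℝ ({toR a, toR b, toR c} : Set (ℝ × ℝ)))
    (h2 : (TwoLatticeInOpenSeg (toR a) (toR b) ∧ TwoLatticeInOpenSeg (toR b) (toR c)) ∨
          (TwoLatticeInOpenSeg (toR b) (toR c) ∧ TwoLatticeInOpenSeg (toR a) (toR c)) ∨
          (TwoLatticeInOpenSeg (toR a) (toR b) ∧ TwoLatticeInOpenSeg (toR a) (toR c))) :
    ∃ p : ℝ × ℝ, IsLatticePt p ∧
      p ∈ interior (convexHull ℝ ({toR a, toR b, toR c} : Set (ℝ × ℝ))) := by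
  simp only [twoLatticeInOpenSeg_iff_two_le_encard] at h2
  simpa only [mem_intLattice] using lattice_point_in_triangle_of_two_rich_edges_general (by simp)
    intLattice (toR_mem_intLattice a) (toR_mem_intLattice b) (toR_mem_intLattice c) hnc h2
end
end

section
/- Every triangle with vertices in ℤ × ℤ that contains no point of ℤ × ℤ in its interior has height at most 2. -/
/-!
Let `abc` be a counterclockwise lattice triangle whose edge `ab` consists of `g` primitive lattice
steps, and let `h` be its height over `ab`, so that `orientZ a b c = g * h`. The lattice line next
to `ab` on the side of `c` meets the triangle in a segment of `g * (h - 1) / h` lattice steps. If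
`2 ≤ g` and `3 ≤ h`, this is more than one step, so there is a lattice point in the interior.
If `g = 1`, the segment has `1 - 1 / h` steps and its endpoints divide steps of the line into
`h`-ths, so it still contains a lattice point. This is an interior point of the triangle unless it
is an endpoint of the segment; then it cuts off `1 / h` of the side `bc` or `ca`, so that side has
at least `h = orientZ a b c` steps and the triangle has height one over it.
-/

open scoped Classical

noncomputable section

/-- Integer orientation determinant of a triple of lattice points. -/
def orientZ (a b c : ℤ × ℤ) : ℤ :=
  (b.1 - a.1) * (c.2 - a.2) - (b.2 - a.2) * (c.1 - a.1)

/-- Height of the lattice triangle `abp` with respect to the edge `ab`: `0` if `p` lies on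
the line `ab`, and otherwise one plus the number of lines parallel to `ab`, strictly between
the line `ab` and `p`, containing a lattice point. Such lines correspond to the values of
`orientZ a b ·` strictly between `0` and `orientZ a b p` attained at lattice points. -/
noncomputable def heightWrt (a b p : ℤ × ℤ) : ℕ :=
  if orientZ a b p = 0 then 0
  else 1 + {v : ℤ | ((0 < v ∧ v < orientZ a b p) ∨ (orientZ a b p < v ∧ v < 0)) ∧
      ∃ q : ℤ × ℤ, orientZ a b q = v}.ncard

/-- The height of a lattice triangle: the minimum of its heights with respect to its edges. -/
noncomputable def triHeight (a b c : ℤ × ℤ) : ℕ :=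
  min (heightWrt a b c) (min (heightWrt b c a) (heightWrt c a b))

section Orientation

variable (a b c q s : ℤ × ℤ)

lemma orientZ_rotate : orientZ b c a = orientZ a b c := by
  simp only [orientZ]
  ring

lemma orientZ_swap : orientZ b a c = -orientZ a b c := by
  simp only [orientZ]
  ring

lemma orientZ_add_orientZ_add_orientZ :
    orientZ a b q + orientZ b c q + orientZ c a q = orientZ a b c := by
  simp only [orientZ]
  ring

lemma orientZ_plucker :
    orientZ a b q * orientZ b c s =
      orientZ a b c * orientZ b q s + orientZ a b s * orientZ b c q := by
  simp only [orientZ]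
  ring

lemma orient_toR : orient (toR a) (toR b) (toR c) = orientZ a b c := by
  simp [orient, orientZ, toR]

end Orientation

section LatticeLength

/-- The lattice length of the segment from `a` to `b`: the number of primitive lattice steps it
consists of, which is `0` when `a = b`. -/
def latticeLength (a b : ℤ × ℤ) : ℕ :=
  Int.gcd (b.1 - a.1) (b.2 - a.2)

lemma latticeLength_comm (a b : ℤ × ℤ) : latticeLength a b = latticeLength b a := by
  rw [latticeLength, latticeLength, ← Int.gcd_neg, ← Int.neg_gcd, neg_sub, neg_sub]

lemma exists_latticeLength_smul_eq_sub (a b : ℤ × ℤ) :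
    ∃ u : ℤ × ℤ, (latticeLength a b : ℤ) • u = b - a := by
  obtain ⟨x, hx⟩ : (latticeLength a b : ℤ) ∣ b.1 - a.1 := Int.gcd_dvd_left _ _
  obtain ⟨y, hy⟩ : (latticeLength a b : ℤ) ∣ b.2 - a.2 := Int.gcd_dvd_right _ _
  exact ⟨(x, y), Prod.ext hx.symm hy.symm⟩

lemma exists_orientZ_eq_iff {a b : ℤ × ℤ} {v : ℤ} :
    (∃ q, orientZ a b q = v) ↔ (latticeLength a b : ℤ) ∣ v := by
  constructor
  · rintro ⟨q, rfl⟩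
    exact dvd_sub (Int.gcd_dvd_left _ _ |>.mul_right _) (Int.gcd_dvd_right _ _ |>.mul_right _)
  · rintro ⟨k, rfl⟩
    have bezout := Int.gcd_eq_gcd_ab (b.1 - a.1) (b.2 - a.2)
    refine ⟨a + k • (-Int.gcdB (b.1 - a.1) (b.2 - a.2), Int.gcdA (b.1 - a.1) (b.2 - a.2)), ?_⟩
    simp only [orientZ, latticeLength, Prod.fst_add, Prod.snd_add, Prod.smul_mk, smul_eq_mul]
    linear_combination -k * bezout

lemma latticeLength_dvd_orientZ (a b q : ℤ × ℤ) : (latticeLength a b : ℤ) ∣ orientZ a b q :=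
  exists_orientZ_eq_iff.1 ⟨q, rfl⟩

lemma latticeLength_pos {a b c : ℤ × ℤ} (h : orientZ a b c ≠ 0) : 0 < latticeLength a b := by
  refine Nat.pos_of_ne_zero fun h₀ => h ?_
  simpa [h₀] using latticeLength_dvd_orientZ a b c

lemma orientZ_dvd_orientZ_mul_latticeLength {a b c q : ℤ × ℤ} (hq : orientZ b c q = 0) :
    orientZ a b c ∣ orientZ a b q * latticeLength b c := by
  obtain ⟨s, hs⟩ : ∃ s, orientZ b c s = latticeLength b c := exists_orientZ_eq_iff.2 dvd_rfl
  refine ⟨orientZ b q s, ?_⟩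
  rw [← hs, orientZ_plucker, hq, mul_zero, add_zero]

end LatticeLength

section Height

lemma one_add_ncard_multiples_between_zero {g : ℤ} (hg : 0 < g) {h : ℤ} (hh : h ≠ 0) :
    1 + {v : ℤ | ((0 < v ∧ v < g * h) ∨ (g * h < v ∧ v < 0)) ∧ g ∣ v}.ncard = h.natAbs := by
  have image_eq : {v : ℤ | ((0 < v ∧ v < g * h) ∨ (g * h < v ∧ v < 0)) ∧ g ∣ v} =
      (g * ·) '' ↑(Finset.Ioo 0 h ∪ Finset.Ioo h 0) := by
    ext v
    constructor
    · rintro ⟨hv, k, rfl⟩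
      exact ⟨k, by simpa [hg, mul_neg_iff, hg.not_gt] using hv, rfl⟩
    · rintro ⟨k, hk, rfl⟩
      exact ⟨by simpa [hg, mul_neg_iff, hg.not_gt] using hk, dvd_mul_right g k⟩
  rw [image_eq, Set.ncard_image_of_injective _ (mul_right_injective₀ hg.ne'),
    Set.ncard_coe_finset]
  rcases hh.lt_or_gt with hh | hh
  · rw [Finset.Ioo_eq_empty_of_le hh.le, Finset.empty_union, Int.card_Ioo]
    omega
  · rw [Finset.Ioo_eq_empty_of_le hh.le, Finset.union_empty, Int.card_Ioo]
    omega

lemma heightWrt_mul_latticeLength (a b p : ℤ × ℤ) :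
    heightWrt a b p * latticeLength a b = (orientZ a b p).natAbs := by
  by_cases h₀ : orientZ a b p = 0
  · simp [heightWrt, h₀]
  have hg : (0 : ℤ) < latticeLength a b := mod_cast latticeLength_pos h₀
  obtain ⟨h, hh⟩ := latticeLength_dvd_orientZ a b p
  have height_eq : heightWrt a b p = h.natAbs := by
    rw [heightWrt, if_neg h₀]
    simp only [exists_orientZ_eq_iff, hh]
    exact one_add_ncard_multiples_between_zero hg (right_ne_zero_of_mul (hh ▸ h₀))
  rw [height_eq, hh, Int.natAbs_mul, Int.natAbs_natCast, mul_comm]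

lemma heightWrt_swap (a b p : ℤ × ℤ) : heightWrt b a p = heightWrt a b p := by
  by_cases h₀ : orientZ a b p = 0
  · simp [heightWrt, orientZ_swap a b, h₀]
  apply Nat.eq_of_mul_eq_mul_right (latticeLength_pos h₀)
  rw [heightWrt_mul_latticeLength, latticeLength_comm, heightWrt_mul_latticeLength, orientZ_swap,
    Int.natAbs_neg]

lemma triHeight_swap (a b c : ℤ × ℤ) : triHeight b a c = triHeight a b c := by
  rw [triHeight, triHeight, heightWrt_swap a b, heightWrt_swap c a, heightWrt_swap b c,
    min_comm (heightWrt c a b)]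

variable {a b c : ℤ × ℤ}

lemma heightWrt_mul_latticeLength_of_pos (hD : 0 < orientZ a b c) :
    (heightWrt a b c * latticeLength a b : ℤ) = orientZ a b c := by
  rw [← Int.natAbs_of_nonneg hD.le]
  exact_mod_cast heightWrt_mul_latticeLength a b c

lemma heightWrt_le_one_of_dvd (h : orientZ a b c ∣ latticeLength a b) : heightWrt a b c ≤ 1 := by
  by_cases h₀ : orientZ a b c = 0
  · simp [heightWrt, h₀]
  have hg := latticeLength_pos h₀
  have hle : (orientZ a b c).natAbs ≤ latticeLength a b :=
    Nat.le_of_dvd hg (Int.natAbs_dvd_natAbs.2 h)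
  rw [← heightWrt_mul_latticeLength] at hle
  exact Nat.le_of_mul_le_mul_right (by rwa [one_mul]) hg

end Height

section InteriorPoints

/-- `q` lies strictly to the left of the directed lines `ab`, `bc` and `ca`. If the triangle `abc`
is oriented counterclockwise, this says that `q` lies in its interior; otherwise no such `q`
exists. -/
def StrictlyInside (a b c q : ℤ × ℤ) : Prop :=
  0 < orientZ a b q ∧ 0 < orientZ b c q ∧ 0 < orientZ c a q

lemma mem_convexHull_of_orient_nonneg {a b c x : ℝ × ℝ} (hD : 0 < orient a b c)
    (hab : 0 ≤ orient a b x) (hbc : 0 ≤ orient b c x) (hca : 0 ≤ orient c a x) :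
    x ∈ convexHull ℝ ({a, b, c} : Set (ℝ × ℝ)) := by
  -- The barycentric coordinates of `x`, up to the factor `orient a b c`.
  let w : Fin 3 → ℝ := ![orient b c x, orient c a x, orient a b x]
  have sum_w : ∑ i, w i = orient a b c := by
    simp only [w, Fin.sum_univ_three, Matrix.cons_val, orient]
    ring
  have cramer : ∑ i, w i • ![a, b, c] i = orient a b c • x := by
    ext <;>
    · simp only [w, Fin.sum_univ_three, Matrix.cons_val, orient, Prod.fst_add, Prod.snd_add,
        Prod.smul_fst, Prod.smul_snd, smul_eq_mul]
      ring
  have hx : Finset.univ.centerMass w ![a, b, c] = x := by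
    rw [Finset.centerMass, cramer, sum_w, inv_smul_smul₀ hD.ne']
  rw [← hx]
  apply Finset.univ.centerMass_mem_convexHull _ (sum_w ▸ hD)
  · simp [Fin.forall_fin_succ]
  · simp [w, Fin.forall_fin_succ, hab, hbc, hca]

lemma isOpen_setOf_orient_pos (a b : ℝ × ℝ) : IsOpen {x | 0 < orient a b x} := by
  unfold orient
  exact isOpen_lt (by fun_prop) (by fun_prop)

variable {a b c q : ℤ × ℤ}

lemma StrictlyInside.toR_mem_interior (h : StrictlyInside a b c q) :
    toR q ∈ interior (convexHull ℝ ({toR a, toR b, toR c} : Set (ℝ × ℝ))) := by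
  obtain ⟨hab, hbc, hca⟩ := h
  have hD : 0 < orient (toR a) (toR b) (toR c) := by
    rw [orient_toR, ← orientZ_add_orientZ_add_orientZ a b c q]
    exact_mod_cast add_pos (add_pos hab hbc) hca
  refine mem_interior.2 ⟨_,
    fun x hx => mem_convexHull_of_orient_nonneg hD hx.1.le hx.2.1.le hx.2.2.le,
    (isOpen_setOf_orient_pos _ _).inter
      ((isOpen_setOf_orient_pos _ _).inter (isOpen_setOf_orient_pos _ _)), ?_⟩
  simpa [orient_toR] using ⟨hab, hbc, hca⟩

-- Between consecutive lattice points of the line next to `ab`, `orientZ c a` changes by exactly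
-- the height over `ab`, so each half-open interval of that length is hit.
lemma exists_orientZ_eq_latticeLength_and_mem_Ico (hD : 0 < orientZ a b c) (m : ℤ) :
    ∃ q, orientZ a b q = latticeLength a b ∧
      orientZ c a q ∈ Set.Ico m (m + heightWrt a b c) := by
  have hg : (latticeLength a b : ℤ) ≠ 0 := mod_cast (latticeLength_pos hD.ne').ne'
  have hD_eq := heightWrt_mul_latticeLength_of_pos hD
  have hheight : (0 : ℤ) < heightWrt a b c :=
    pos_of_mul_pos_left (hD_eq ▸ hD) (by positivity)
  obtain ⟨u, hu⟩ := exists_latticeLength_smul_eq_sub a b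
  obtain ⟨hu₁, hu₂⟩ := Prod.ext_iff.1 hu
  simp only [Prod.smul_fst, Prod.smul_snd, Prod.fst_sub, Prod.snd_sub, smul_eq_mul] at hu₁ hu₂
  obtain ⟨q₀, hq₀⟩ : ∃ q, orientZ a b q = latticeLength a b := exists_orientZ_eq_iff.2 dvd_rfl
  obtain ⟨t, ht, -⟩ := existsUnique_add_zsmul_mem_Ico hheight (orientZ c a q₀) m
  have step_height : (a.1 - c.1) * u.2 - (a.2 - c.2) * u.1 = heightWrt a b c := by
    apply mul_left_cancel₀ hg
    rw [mul_comm _ (heightWrt a b c : ℤ), hD_eq, orientZ]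
    linear_combination (a.1 - c.1) * hu₂ - (a.2 - c.2) * hu₁
  refine ⟨q₀ + t • u, ?_, ?_⟩
  · rw [← hq₀]
    simp only [orientZ, Prod.fst_add, Prod.snd_add, Prod.smul_fst, Prod.smul_snd, smul_eq_mul]
    linear_combination t * u.1 * hu₂ - t * u.2 * hu₁
  · convert ht using 1
    rw [← step_height]
    simp only [orientZ, Prod.fst_add, Prod.snd_add, Prod.smul_fst, Prod.smul_snd, smul_eq_mul]
    ring

lemma exists_strictlyInside_of_two_le_latticeLength (hD : 0 < orientZ a b c)
    (hlength : 2 ≤ latticeLength a b) (hheight : 2 < heightWrt a b c) :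
    ∃ q, StrictlyInside a b c q := by
  obtain ⟨q, hab, hca⟩ := exists_orientZ_eq_latticeLength_and_mem_Ico hD 1
  have hsum := orientZ_add_orientZ_add_orientZ a b c q
  rw [← heightWrt_mul_latticeLength_of_pos hD, hab] at hsum
  obtain ⟨hca_pos, hca_lt⟩ := hca
  refine ⟨q, by omega, ?_, by omega⟩
  have hmul : (0 : ℤ) < (heightWrt a b c - 2) * (latticeLength a b - 1) :=
    mul_pos (by omega) (by omega)
  linarith

lemma exists_strictlyInside_or_dvd_of_latticeLength_eq_one (hD : 0 < orientZ a b c)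
    (hlength : latticeLength a b = 1) :
    (∃ q, StrictlyInside a b c q) ∨
      orientZ a b c ∣ latticeLength b c ∨ orientZ a b c ∣ latticeLength c a := by
  obtain ⟨q, hab, hca⟩ := exists_orientZ_eq_latticeLength_and_mem_Ico hD 0
  have hsum := orientZ_add_orientZ_add_orientZ a b c q
  have hD_eq := heightWrt_mul_latticeLength_of_pos hD
  rw [hlength, Nat.cast_one] at hab hD_eq
  obtain ⟨hca_nonneg, hca_lt⟩ := hca
  have hbc_nonneg : 0 ≤ orientZ b c q := by omega
  rcases hca_nonneg.eq_or_lt with hca_zero | hca_pos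
  · have hac_zero : orientZ a c q = 0 := by rw [orientZ_swap, ← hca_zero, neg_zero]
    have hdvd := orientZ_dvd_orientZ_mul_latticeLength (a := b) hac_zero
    rw [orientZ_swap a b c, orientZ_swap a b q, hab, latticeLength_comm] at hdvd
    exact .inr (.inr (by simpa using hdvd))
  rcases hbc_nonneg.eq_or_lt with hbc_zero | hbc_pos
  · have hdvd := orientZ_dvd_orientZ_mul_latticeLength (a := a) hbc_zero.symm
    rw [hab, one_mul] at hdvd
    exact .inr (.inl hdvd)
  · exact .inl ⟨q, hab ▸ one_pos, hbc_pos, hca_pos⟩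

lemma exists_strictlyInside_of_two_lt_triHeight (hD : 0 < orientZ a b c)
    (hheight : 2 < triHeight a b c) : ∃ q, StrictlyInside a b c q := by
  obtain ⟨hab, hbc, hca⟩ : 2 < heightWrt a b c ∧ 2 < heightWrt b c a ∧ 2 < heightWrt c a b := by
    simpa only [triHeight, lt_min_iff] using hheight
  rcases Nat.eq_or_lt_of_le (latticeLength_pos hD.ne') with hlength | hlength
  · rcases exists_strictlyInside_or_dvd_of_latticeLength_eq_one hD hlength.symm
      with hinside | hdvd | hdvd
    · exact hinside
    · rw [← orientZ_rotate] at hdvd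
      exact absurd (heightWrt_le_one_of_dvd hdvd) (by omega)
    · rw [← orientZ_rotate, ← orientZ_rotate] at hdvd
      exact absurd (heightWrt_le_one_of_dvd hdvd) (by omega)
  · exact exists_strictlyInside_of_two_le_latticeLength hD hlength hab

end InteriorPoints

/-- Any lattice triangle with no lattice point in its interior has height at most `2`. -/
theorem interior_empty_lattice_triangle_height_le_two (a b c : ℤ × ℤ)
    (hnc : ¬ Collinear ℝ ({toR a, toR b, toR c} : Set (ℝ × ℝ)))
    (hempty : ∀ p : ℤ × ℤ,
      toR p ∉ interior (convexHull ℝ ({toR a, toR b, toR c} : Set (ℝ × ℝ)))) :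
    triHeight a b c ≤ 2 := by
  by_contra! hheight
  rcases lt_trichotomy (orientZ a b c) 0 with hD | hD | hD
  · have hD' : 0 < orientZ b a c := by rwa [orientZ_swap, neg_pos]
    rw [← triHeight_swap] at hheight
    obtain ⟨q, hq⟩ := exists_strictlyInside_of_two_lt_triHeight hD' hheight
    exact hempty q (Set.insert_comm (toR a) (toR b) {toR c} ▸ hq.toR_mem_interior)
  · simp [triHeight, heightWrt, hD] at hheight
  · obtain ⟨q, hq⟩ := exists_strictlyInside_of_two_lt_triHeight hD hheight
    exact hempty q hq.toR_mem_interior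
end
end
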